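/- Discrepancy probability for half-spaces in the plane: Let w, v ∈ ℝ² be unit vectors, let Θ be uniformly distributed on [0, 2π), and let X := (cos Θ, sin Θ). Then P[ 𝟙[⟨w, X⟩ ≥ 0] ≠ 𝟙[⟨v, X⟩ ≥ 0] ] = arccos(⟨w, v⟩) / π. -/

import Mathlib

open MeasureTheory Real
open scoped RealInnerProductSpace

/-!
Only the directions of `w` and `v` matter. The directions that `w` labels `1` form the closed half
circle centred at the polar angle of `w`, so the labels disagree exactly on the symmetric difference
of two half circles. If their centres are at angular distance `d ∈ [0, π]`, then within one period
this symmetric difference consists of two arcs of length `d`, one at each end of the first half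
circle, and `2 d / (2 π) = d / π`.
-/

open scoped symmDiff

theorem measure_inter_Ioc_eq_of_periodic {T : ℝ} (hT : 0 < T) (μ : Measure ℝ)
    [VAddInvariantMeasure (AddSubgroup.zmultiples T) ℝ μ] {s : Set ℝ} (hs : MeasurableSet s)
    (hper : Function.Periodic (· ∈ s) T) (a b : ℝ) :
    μ (s ∩ Set.Ioc a (a + T)) = μ (s ∩ Set.Ioc b (b + T)) :=
  (isAddFundamentalDomain_Ioc hT a μ).measure_set_eq (isAddFundamentalDomain_Ioc hT b μ) hs
    fun g ↦ Set.ext fun t ↦ iff_of_eq (hper.map_vadd_zmultiples g t)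

theorem cos_nonneg_iff_abs_le_pi_div_two {t : ℝ} (ht : |t| < 3 * π / 2) :
    0 ≤ cos t ↔ |t| ≤ π / 2 := by
  rw [← cos_abs]
  refine ⟨fun h ↦ ?_, fun h ↦ cos_nonneg_of_neg_pi_div_two_le_of_le ?_ h⟩
  · by_contra! hlt
    exact h.not_gt (cos_neg_of_pi_div_two_lt_of_lt hlt (by linarith))
  · linarith [pi_pos, abs_nonneg t]

/-- The closed half circle with centre `a`, encoded as the `2 * π`-periodic set of the angles of all
its points. -/
def halfCircle (a : ℝ) : Set ℝ := {t | 0 ≤ cos (t - a)}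

theorem mem_halfCircle {a t : ℝ} : t ∈ halfCircle a ↔ 0 ≤ cos (t - a) := Iff.rfl

theorem mem_halfCircle_iff_abs_le {a t : ℝ} (ht : |t - a| < 3 * π / 2) :
    t ∈ halfCircle a ↔ |t - a| ≤ π / 2 :=
  cos_nonneg_iff_abs_le_pi_div_two ht

theorem measurableSet_halfCircle (a : ℝ) : MeasurableSet (halfCircle a) :=
  measurableSet_le measurable_const (by fun_prop)

theorem halfCircle_add_int_mul_two_pi (a : ℝ) (k : ℤ) :
    halfCircle (a + k * (2 * π)) = halfCircle a := by
  ext t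
  rw [mem_halfCircle, mem_halfCircle, ← sub_sub, cos_sub_int_mul_two_pi]

theorem periodic_mem_halfCircle (a : ℝ) : Function.Periodic (· ∈ halfCircle a) (2 * π) := fun t ↦ by
  simp only [mem_halfCircle, add_sub_right_comm, cos_add_two_pi]

theorem periodic_mem_symmDiff_halfCircle (a b : ℝ) :
    Function.Periodic (· ∈ halfCircle a ∆ halfCircle b) (2 * π) := fun t ↦ by
  simp only [Set.mem_symmDiff, periodic_mem_halfCircle a t, periodic_mem_halfCircle b t]

theorem mem_symmDiff_halfCircle_add_iff {a d t : ℝ} (h0 : 0 ≤ d) (hd : d ≤ π)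
    (ht : t ∈ Set.Ioo (a - π / 2) (a - π / 2 + 2 * π)) :
    t ∈ halfCircle a ∆ halfCircle (a + d) ↔
      t ∈ Set.Ioo (a - π / 2) (a - π / 2 + d) ∪ Set.Ioc (a + π / 2) (a + π / 2 + d) := by
  obtain ⟨hlt, hgt⟩ := ht
  have hta : |t - a| < 3 * π / 2 := abs_lt.mpr ⟨by linarith, by linarith⟩
  have htd : |t - (a + d)| < 3 * π / 2 := abs_lt.mpr ⟨by linarith, by linarith⟩
  rw [Set.mem_symmDiff, mem_halfCircle_iff_abs_le hta, mem_halfCircle_iff_abs_le htd]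
  simp only [Set.mem_union, Set.mem_Ioo, Set.mem_Ioc, abs_le]
  grind

theorem symmDiff_halfCircle_add_inter_Ioc_ae_eq (a : ℝ) {d : ℝ} (h0 : 0 ≤ d) (hd : d ≤ π) :
    (halfCircle a ∆ halfCircle (a + d) ∩ Set.Ioc (a - π / 2) (a - π / 2 + 2 * π) : Set ℝ) =ᵐ[volume]
      (Set.Ioo (a - π / 2) (a - π / 2 + d) ∪ Set.Ioc (a + π / 2) (a + π / 2 + d) : Set ℝ) := by
  rw [Filter.eventuallyEq_set]
  -- For `d = π` the right end of the period lies in the second arc, but in both half circles.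
  filter_upwards [volume.ae_ne (a - π / 2 + 2 * π)] with t ht
  have h_arcs : t ∈ Set.Ioo (a - π / 2) (a - π / 2 + d) ∪ Set.Ioc (a + π / 2) (a + π / 2 + d) →
      t ∈ Set.Ioc (a - π / 2) (a - π / 2 + 2 * π) := by
    rintro (⟨h₁, h₂⟩ | ⟨h₁, h₂⟩) <;> constructor <;> linarith
  rw [Set.mem_inter_iff]
  refine ⟨fun ⟨hmem, h⟩ ↦ ?_, fun hmem ↦ ⟨?_, h_arcs hmem⟩⟩
  · exact (mem_symmDiff_halfCircle_add_iff h0 hd ⟨h.1, h.2.lt_of_ne ht⟩).mp hmem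
  · have h := h_arcs hmem
    exact (mem_symmDiff_halfCircle_add_iff h0 hd ⟨h.1, h.2.lt_of_ne ht⟩).mpr hmem

theorem volume_symmDiff_halfCircle_add_inter_Ioc (a c : ℝ) {d : ℝ} (h0 : 0 ≤ d) (hd : d ≤ π) :
    volume (halfCircle a ∆ halfCircle (a + d) ∩ Set.Ioc c (c + 2 * π)) =
      ENNReal.ofReal (2 * d) := by
  have hdisj : Disjoint (Set.Ioo (a - π / 2) (a - π / 2 + d))
      (Set.Ioc (a + π / 2) (a + π / 2 + d)) :=
    Set.disjoint_left.mpr fun t ht ht' ↦ by linarith [ht.2, ht'.1]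
  rw [measure_inter_Ioc_eq_of_periodic two_pi_pos volume
      ((measurableSet_halfCircle a).symmDiff (measurableSet_halfCircle (a + d)))
      (periodic_mem_symmDiff_halfCircle a (a + d)) c (a - π / 2),
    measure_congr (symmDiff_halfCircle_add_inter_Ioc_ae_eq a h0 hd),
    measure_union hdisj measurableSet_Ioc, volume_Ioo, volume_Ioc, add_sub_cancel_left,
    add_sub_cancel_left, two_mul, ENNReal.ofReal_add h0 h0]

theorem volume_symmDiff_halfCircle_inter_Ioc (a b c : ℝ) :
    volume (halfCircle a ∆ halfCircle b ∩ Set.Ioc c (c + 2 * π)) =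
      ENNReal.ofReal (2 * arccos (cos (a - b))) := by
  set d := arccos (cos (a - b))
  have hcos : cos (a - b) = cos d := (cos_arccos (neg_one_le_cos _) (cos_le_one _)).symm
  have hvol (x : ℝ) : volume (halfCircle x ∆ halfCircle (x + d) ∩ Set.Ioc c (c + 2 * π)) =
      ENNReal.ofReal (2 * d) :=
    volume_symmDiff_halfCircle_add_inter_Ioc x c (arccos_nonneg _) (arccos_le_pi _)
  obtain ⟨k, hk | hk⟩ := cos_eq_cos_iff.mp hcos
  · have ha : a = b + d + (-k : ℤ) * (2 * π) := by push_cast; linarith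
    rw [ha, halfCircle_add_int_mul_two_pi, symmDiff_comm, hvol]
  · have hb : b = a + d + (-k : ℤ) * (2 * π) := by push_cast; linarith
    rw [hb, halfCircle_add_int_mul_two_pi, hvol]

theorem measure_preimage_symmDiff_halfCircle {Ω : Type*} [MeasurableSpace Ω] {μ : Measure Ω}
    {Θ : Ω → ℝ} {c : ℝ} (hΘ : pdf.IsUniform Θ (Set.Ico c (c + 2 * π)) μ) (a b : ℝ) :
    μ (Θ ⁻¹' (halfCircle a ∆ halfCircle b)) = ENNReal.ofReal (arccos (cos (a - b)) / π) := by
  have hperiod : volume (Set.Ico c (c + 2 * π)) = ENNReal.ofReal (2 * π) := by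
    rw [volume_Ico, add_sub_cancel_left]
  have harcs : volume (Set.Ico c (c + 2 * π) ∩ halfCircle a ∆ halfCircle b) =
      ENNReal.ofReal (2 * arccos (cos (a - b))) := by
    rw [Set.inter_comm, ← volume_symmDiff_halfCircle_inter_Ioc a b c]
    exact measure_congr (Filter.EventuallyEq.rfl.inter Ico_ae_eq_Ioc)
  have hpos : volume (Set.Ico c (c + 2 * π)) ≠ 0 := by
    rw [hperiod]
    exact (ENNReal.ofReal_pos.mpr two_pi_pos).ne'
  rw [hΘ.measure_preimage hpos measure_Ico_lt_top.ne
      ((measurableSet_halfCircle a).symmDiff (measurableSet_halfCircle b)),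
    harcs, hperiod, ← ENNReal.ofReal_div_of_pos two_pi_pos, mul_div_mul_left _ _ two_ne_zero]

/-- The unit vector of the plane with polar angle `θ`. -/
noncomputable def unitVec (θ : ℝ) : EuclideanSpace ℝ (Fin 2) := !₂[cos θ, sin θ]

theorem inner_unitVec (a b : ℝ) : ⟪unitVec a, unitVec b⟫ = cos (b - a) := by
  simp [unitVec, PiLp.inner_apply, Fin.sum_univ_two, cos_sub]

theorem norm_unitVec (a : ℝ) : ‖unitVec a‖ = 1 := by
  rw [norm_eq_sqrt_real_inner, inner_unitVec, sub_self, cos_zero, sqrt_one]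

theorem angle_unitVec (a b : ℝ) :
    InnerProductGeometry.angle (unitVec a) (unitVec b) = arccos (cos (a - b)) := by
  simp [InnerProductGeometry.angle, norm_unitVec, inner_unitVec, ← cos_neg (a - b)]

theorem exists_pos_smul_unitVec_eq {w : EuclideanSpace ℝ (Fin 2)} (hw : w ≠ 0) :
    ∃ r : ℝ, 0 < r ∧ ∃ a, r • unitVec a = w := by
  let z : ℂ := Complex.orthonormalBasisOneI.repr.symm w
  have hz : Complex.orthonormalBasisOneI.repr z = w := LinearIsometryEquiv.apply_symm_apply _ w
  have hz_pos : 0 < ‖z‖ := by rwa [LinearIsometryEquiv.norm_map, norm_pos_iff]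
  refine ⟨‖z‖, hz_pos, z.arg, ?_⟩
  rw [← hz]
  ext i
  fin_cases i <;> simp [unitVec, Complex.orthonormalBasisOneI_repr_apply]

theorem inner_smul_unitVec_nonneg_iff {r : ℝ} (hr : 0 < r) (a θ : ℝ) :
    0 ≤ ⟪r • unitVec a, unitVec θ⟫ ↔ θ ∈ halfCircle a := by
  rw [real_inner_smul_left, inner_unitVec, mul_nonneg_iff_of_pos_left hr, mem_halfCircle]

theorem halfspace_discrepancy_probability_general
    {Ω : Type*} [MeasurableSpace Ω] {μ : Measure Ω}
    {w v : EuclideanSpace ℝ (Fin 2)} (hw : w ≠ 0) (hv : v ≠ 0)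
    {Θ : Ω → ℝ} {c : ℝ} (hΘ : pdf.IsUniform Θ (Set.Ico c (c + 2 * π)) μ) :
    μ {ω | (if 0 ≤ ⟪w, unitVec (Θ ω)⟫ then (1 : ℕ) else 0) ≠
        (if 0 ≤ ⟪v, unitVec (Θ ω)⟫ then (1 : ℕ) else 0)}
      = ENNReal.ofReal (InnerProductGeometry.angle w v / π) := by
  obtain ⟨r, hr, a, rfl⟩ := exists_pos_smul_unitVec_eq hw
  obtain ⟨s, hs, b, rfl⟩ := exists_pos_smul_unitVec_eq hv
  have hset : {ω | (if 0 ≤ ⟪r • unitVec a, unitVec (Θ ω)⟫ then (1 : ℕ) else 0) ≠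
      (if 0 ≤ ⟪s • unitVec b, unitVec (Θ ω)⟫ then (1 : ℕ) else 0)} =
        Θ ⁻¹' (halfCircle a ∆ halfCircle b) := by
    ext ω
    rw [Set.mem_ofPred_eq, Set.mem_preimage, Set.mem_symmDiff, ← inner_smul_unitVec_nonneg_iff hr,
      ← inner_smul_unitVec_nonneg_iff hs]
    grind
  have hangle : InnerProductGeometry.angle (r • unitVec a) (s • unitVec b) =
      arccos (cos (a - b)) := by
    rw [InnerProductGeometry.angle_smul_left_of_pos _ _ hr,
      InnerProductGeometry.angle_smul_right_of_pos _ _ hs, angle_unitVec]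
  rw [hset, measure_preimage_symmDiff_halfCircle hΘ, hangle]

/-- Discrepancy probability for half-spaces in the plane: if `w, v` are unit
vectors in `ℝ²`, `Θ` is uniform on `[0, 2π)` and `X = (cos Θ, sin Θ)`, then
`P[𝟙[⟨w,X⟩ ≥ 0] ≠ 𝟙[⟨v,X⟩ ≥ 0]] = arccos ⟨w,v⟩ / π`. -/
theorem halfspace_discrepancy_probability
    {Ω : Type*} [MeasurableSpace Ω] (μ : Measure Ω) [IsProbabilityMeasure μ]
    (w v : EuclideanSpace ℝ (Fin 2)) (hw : ‖w‖ = 1) (hv : ‖v‖ = 1)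
    (Θ : Ω → ℝ) (hΘmeas : Measurable Θ)
    -- `Θ` is uniformly distributed on `[0, 2π)`
    (hΘ : Measure.map Θ μ
      = (ENNReal.ofReal (2 * Real.pi))⁻¹ • volume.restrict (Set.Ico (0 : ℝ) (2 * Real.pi)))
    (X : Ω → EuclideanSpace ℝ (Fin 2))
    (hX : ∀ ω, X ω = (WithLp.equiv 2 (Fin 2 → ℝ)).symm ![Real.cos (Θ ω), Real.sin (Θ ω)]) :
    μ {ω | (if 0 ≤ ⟪w, X ω⟫ then (1 : ℕ) else 0) ≠ (if 0 ≤ ⟪v, X ω⟫ then (1 : ℕ) else 0)}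
      = ENNReal.ofReal (Real.arccos ⟪w, v⟫ / Real.pi) := by
  have hΘ' : pdf.IsUniform Θ (Set.Ico 0 (0 + 2 * π)) μ := by
    simpa [pdf.IsUniform, ProbabilityTheory.cond] using hΘ
  obtain rfl : X = fun ω ↦ unitVec (Θ ω) := funext hX
  have hw0 : w ≠ 0 := norm_pos_iff.mp (hw ▸ one_pos)
  have hv0 : v ≠ 0 := norm_pos_iff.mp (hv ▸ one_pos)
  simpa [InnerProductGeometry.angle, hw, hv] using
    halfspace_discrepancy_probability_general hw0 hv0 hΘ'
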